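/- arXiv:2407.04462 — 4 statements merged into one kernel-verified Lean document; each statement's English description precedes it below -/
import Mathlib

section
/- Let Q = q_1•⋯•q_n be a generalized subsequence over Σ and let w be a word over Σ. Define the (n+1)×(n+1) integer matrix M(w) by M(w)_{ii} = 1 for all i, M(w)_{i,j+1} = |w|_{q_i•⋯•q_j} for all 1 ≤ i ≤ j ≤ n, and M(w)_{ij} = 0 for i > j. Then every minor of M(w) — the determinant of any square submatrix obtained by selecting equally many rows and columns of M(w) — is a nonnegative integer. -/
/-- Number of occurrences of the generalized subsequence with factor list `Q` in the word `w`.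
The empty sequence of factors has exactly one occurrence in every word. -/
def gsCount {α : Type*} [DecidableEq α] : List (List α) → List α → ℕ
  | [], _ => 1
  | q :: Q, w =>
      ∑ i ∈ Finset.range (w.length + 1 - q.length),
        if (w.drop i).take q.length = q then gsCount Q (w.drop (i + q.length)) else 0

/-- Scattered-subword count `C(w, u)`: the number of occurrences of `u` as a
scattered subword (subsequence) of `w`. -/
def sCount {α : Type*} [DecidableEq α] : List α → List α → ℕ
  | _, [] => 1
  | [], _ :: _ => 0
  | a :: w, b :: u => sCount w (b :: u) + (if a = b then sCount w u else 0)

/-!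
Spell `Q` out letter by letter and read `w` with the automaton whose states are the positions in
this spelling: a letter of `w` either matches the next letter of the spelling, or is skipped, which
is possible only in the gaps between factors. Reading one letter thus acts on the counts by a
nonnegative bidiagonal matrix, and such matrices preserve total nonnegativity: expanding a minor
along the sums in its rows replaces the rows `r 0 < r 1 < ⋯` by `r i` or `r i + 1`, which remain
weakly increasing. The counts for the whole word are therefore totally nonnegative, and `M(w)` is
the submatrix on the states that are gaps.
-/

section TotallyNonneg

variable {ι κ ι' κ' R : Type*} [CommRing R] [PartialOrder R]

/-- A matrix is totally nonnegative if all its minors are nonnegative. The index types need not be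
finite: a minor is always given by finitely many rows and columns in increasing order. -/
def IsTotallyNonneg [Preorder ι] [Preorder κ] (A : Matrix ι κ R) : Prop :=
  ∀ (m : ℕ) (r : Fin m → ι) (c : Fin m → κ), StrictMono r → StrictMono c →
    0 ≤ (A.submatrix r c).det

namespace IsTotallyNonneg

theorem submatrix [Preorder ι] [Preorder κ] [Preorder ι'] [Preorder κ'] {A : Matrix ι κ R}
    (hA : IsTotallyNonneg A) {f : ι' → ι} {g : κ' → κ} (hf : StrictMono f) (hg : StrictMono g) :
    IsTotallyNonneg (A.submatrix f g) :=
  fun m r c hr hc ↦ hA m (f ∘ r) (g ∘ c) (hf.comp hr) (hg.comp hc)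

theorem det_submatrix_nonneg_of_monotone [PartialOrder ι] [Preorder κ] {A : Matrix ι κ R}
    (hA : IsTotallyNonneg A) {m : ℕ} {r : Fin m → ι} {c : Fin m → κ} (hr : Monotone r)
    (hc : StrictMono c) : 0 ≤ (A.submatrix r c).det := by
  by_cases hinj : Function.Injective r
  · exact hA m r c (hr.strictMono_of_injective hinj) hc
  · obtain ⟨i, j, hij, hne⟩ := Function.not_injective_iff.mp hinj
    refine (Matrix.det_zero_of_row_eq hne ?_).ge
    ext k
    simp only [Matrix.submatrix_apply, hij]

theorem one [ZeroLEOneClass R] [LinearOrder ι] : IsTotallyNonneg (1 : Matrix ι ι R) := by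
  intro m r c hr hc
  by_cases hrange : Set.range r = Set.range c
  · obtain rfl := (hr.range_inj hc).mp hrange
    simp only [Matrix.submatrix_one r hr.injective, Matrix.det_one, zero_le_one]
  · suffices ((1 : Matrix ι ι R).submatrix r c).det = 0 from this.ge
    rw [Matrix.det_apply]
    refine Finset.sum_eq_zero fun σ _ ↦ ?_
    obtain ⟨i, hi⟩ : ∃ i, r (σ i) ≠ c i := by
      by_contra! h
      exact hrange (by rw [← funext h, ← Function.comp_def, σ.surjective.range_comp])
    exact smul_eq_zero_of_right _
      (Finset.prod_eq_zero (Finset.mem_univ i) (Matrix.one_apply_ne hi))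

/- A product with a bidiagonal matrix, written entrywise because `ι` may be infinite. -/
theorem bidiagonal_mul [IsOrderedRing R] [PartialOrder ι] [SuccOrder ι] [Preorder κ]
    {A : Matrix ι κ R} (hA : IsTotallyNonneg A) {d e : ι → R} (hd : 0 ≤ d) (he : 0 ≤ e) :
    IsTotallyNonneg (Matrix.of fun s t ↦ d s * A s t + e s * A (Order.succ s) t) := by
  intro m r c hr hc
  let coeff (S : Finset (Fin m)) (i : Fin m) : R := if i ∈ S then d (r i) else e (r i)
  let row (S : Finset (Fin m)) (i : Fin m) : ι := if i ∈ S then r i else Order.succ (r i)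
  have row_mono (S : Finset (Fin m)) : Monotone (row S) := by
    refine monotone_iff_forall_lt.mpr fun i j hij ↦ ?_
    calc row S i ≤ Order.succ (r i) := by
          unfold row; split_ifs <;> simp [Order.le_succ]
      _ ≤ r j := Order.succ_le_of_lt (hr hij)
      _ ≤ row S j := by unfold row; split_ifs <;> simp [Order.le_succ]
  have expansion : ((Matrix.of fun s t ↦ d s * A s t + e s * A (Order.succ s) t).submatrix r c).det
      = ∑ S, (∏ i, coeff S i) * (A.submatrix (row S) c).det := by
    refine (Matrix.detRowAlternating.toMultilinearMap.map_add_univ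
      (fun i j ↦ d (r i) * A (r i) (c j))
      (fun i j ↦ e (r i) * A (Order.succ (r i)) (c j))).trans ?_
    refine Finset.sum_congr rfl fun S _ ↦ ?_
    rw [← Matrix.det_mul_column]
    refine congrArg Matrix.det (Matrix.ext fun i j ↦ ?_)
    by_cases hi : i ∈ S <;> simp [coeff, row, hi]
  rw [expansion]
  refine Finset.sum_nonneg fun S _ ↦ mul_nonneg (Finset.prod_nonneg fun i _ ↦ ?_)
    (hA.det_submatrix_nonneg_of_monotone (row_mono S) hc)
  unfold coeff
  split_ifs
  exacts [hd _, he _]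

end IsTotallyNonneg

end TotallyNonneg

section GeneralizedSubsequence

variable {α : Type*}

theorem gsCount_cons_cons [DecidableEq α] (q : List α) (Q : List (List α)) (a : α) (w : List α) :
    gsCount (q :: Q) (a :: w) = gsCount (q :: Q) w +
      if q <+: a :: w then gsCount Q ((a :: w).drop q.length) else 0 := by
  by_cases hlen : q.length ≤ (a :: w).length
  · have hrange : (a :: w).length + 1 - q.length = w.length + 1 - q.length + 1 := by
      grind
    rw [gsCount, hrange, Finset.sum_range_succ']
    simp [gsCount, List.prefix_iff_eq_take, eq_comm, Nat.add_right_comm]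
  · have hprefix : ¬ q <+: a :: w := fun h ↦ hlen h.length_le
    have hlen' : w.length + 2 ≤ q.length := by grind
    simp [gsCount, hprefix, Nat.sub_eq_zero_of_le, hlen', (Nat.le_succ _).trans hlen']

/-- A vincular pattern over `α`: a word in which a letter marked `true` may be separated by a gap
from what precedes it, while a letter marked `false` must follow immediately. It spells out a
generalized subsequence letter by letter. -/
abbrev VincularPattern (α : Type*) := List (α × Bool)

namespace VincularPattern

/-- The cuts of a pattern are the positions, including its end, where a gap is allowed. -/
def IsCut (p : VincularPattern α) (t : ℕ) : Prop :=
  t ≤ p.length ∧ ∀ x ∈ p[t]?, x.2 = true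

section Occurrences

variable [DecidableEq α]

/-- The number of occurrences of a vincular pattern in a word, where an initial letter marked
`false` can only match the first letter of the word. -/
def occurrences : VincularPattern α → List α → ℕ
  | [], _ => 1
  | _ :: _, [] => 0
  | x :: p, a :: w =>
      (if x.2 then occurrences (x :: p) w else 0) + if x.1 = a then occurrences p w else 0

/-- The matrix whose `(s, t)` entry counts the occurrences in `w` of the factor of `p` between
positions `s` and `t`. -/
def occurrenceMatrix (p : VincularPattern α) (w : List α) : Matrix ℕ ℕ ℤ :=
  Matrix.of fun s t ↦ if s ≤ t then (occurrences ((p.take t).drop s) w : ℤ) else 0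

theorem occurrenceMatrix_nil {p : VincularPattern α} {t : ℕ} (ht : t ≤ p.length) (s : ℕ) :
    p.occurrenceMatrix [] s t = (1 : Matrix ℕ ℕ ℤ) s t := by
  rcases lt_trichotomy s t with hst | rfl | hts
  · have hne : (p.take t).drop s ≠ [] := by
      simpa [List.drop_eq_nil_iff] using ⟨hst, hst.trans_le ht⟩
    obtain ⟨x, p', hp'⟩ := List.exists_cons_of_ne_nil hne
    simp [occurrenceMatrix, hst.le, hst.ne, hp', occurrences]
  · simp [occurrenceMatrix, occurrences]
  · simp [occurrenceMatrix, hts.not_ge, hts.ne']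

open Classical in
theorem occurrenceMatrix_cons {p : VincularPattern α} {t : ℕ} (ht : p.IsCut t) (a : α)
    (w : List α) (s : ℕ) :
    p.occurrenceMatrix (a :: w) s t =
      (if p.IsCut s then 1 else 0) * p.occurrenceMatrix w s t +
        (if p[s]?.map Prod.fst = some a then 1 else 0) * p.occurrenceMatrix w (s + 1) t := by
  rcases lt_trichotomy s t with hst | rfl | hts
  · have hs : s < p.length := hst.trans_le ht.1
    have hdrop : (p.take t).drop s = p[s] :: (p.take t).drop (s + 1) := by
      rw [List.drop_eq_getElem_cons (by simp [hst, hs]), List.getElem_take]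
    simp [occurrenceMatrix, hst.le, Nat.succ_le_of_lt hst, hdrop, occurrences, IsCut, hs, hs.le]
  · simp [occurrenceMatrix, ht, occurrences]
  · simp [occurrenceMatrix, hts.not_ge, (Nat.lt_succ_of_lt hts).not_ge]

theorem isTotallyNonneg_occurrenceMatrix {ι : Type*} [Preorder ι] {p : VincularPattern α}
    {c : ι → ℕ} (hc : StrictMono c) (hcut : ∀ j, p.IsCut (c j)) (w : List α) :
    IsTotallyNonneg ((p.occurrenceMatrix w).submatrix id c) := by
  classical
  induction w with
  | nil =>
    have hone : (p.occurrenceMatrix []).submatrix id c = (1 : Matrix ℕ ℕ ℤ).submatrix id c :=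
      Matrix.ext fun s j ↦ occurrenceMatrix_nil (hcut j).1 s
    rw [hone]
    exact IsTotallyNonneg.one.submatrix strictMono_id hc
  | cons a w ih =>
    let wait (s : ℕ) : ℤ := if p.IsCut s then 1 else 0
    let advance (s : ℕ) : ℤ := if p[s]?.map Prod.fst = some a then 1 else 0
    have hmul : (p.occurrenceMatrix (a :: w)).submatrix id c = Matrix.of fun s j ↦
        wait s * (p.occurrenceMatrix w).submatrix id c s j +
          advance s * (p.occurrenceMatrix w).submatrix id c (Order.succ s) j :=
      Matrix.ext fun s j ↦ occurrenceMatrix_cons (hcut j) a w s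
    rw [hmul]
    exact ih.bidiagonal_mul (fun s ↦ by positivity) (fun s ↦ by positivity)

end Occurrences

/-- The vincular pattern of a single factor: only its first letter may be preceded by a gap. -/
def ofFactor : List α → VincularPattern α
  | [] => []
  | x :: v => (x, true) :: v.map (·, false)

/-- The vincular pattern of the generalized subsequence with factor list `Q`. -/
def ofFactors (Q : List (List α)) : VincularPattern α :=
  Q.flatMap ofFactor

/-- The position in `ofFactors Q` between the first `i` factors and the remaining ones. -/
def factorCut (Q : List (List α)) (i : ℕ) : ℕ :=
  (ofFactors (Q.take i)).length

theorem ofFactors_append (Q Q' : List (List α)) :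
    ofFactors (Q ++ Q') = ofFactors Q ++ ofFactors Q' :=
  List.flatMap_append

theorem take_factorCut (Q : List (List α)) (i : ℕ) :
    (ofFactors Q).take (factorCut Q i) = ofFactors (Q.take i) := by
  conv_lhs => rw [← List.take_append_drop i Q, ofFactors_append, List.take_append_drop]
  exact List.take_left

theorem drop_factorCut (Q : List (List α)) (i : ℕ) :
    (ofFactors Q).drop (factorCut Q i) = ofFactors (Q.drop i) := by
  conv_lhs => rw [← List.take_append_drop i Q, ofFactors_append, List.take_append_drop]
  exact List.drop_left

theorem drop_take_factorCut (Q : List (List α)) {i j : ℕ} (hij : i ≤ j) :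
    ((ofFactors Q).take (factorCut Q j)).drop (factorCut Q i) =
      ofFactors ((Q.drop i).take (j - i)) := by
  rw [take_factorCut, ← List.drop_take, ← drop_factorCut (Q.take j), factorCut, factorCut,
    List.take_take, min_eq_left hij]

theorem isCut_factorCut {Q : List (List α)} (hQ : ∀ q ∈ Q, q ≠ []) (i : ℕ) :
    (ofFactors Q).IsCut (factorCut Q i) := by
  constructor
  · rw [← List.take_append_drop i Q, ofFactors_append]
    simp [factorCut]
  · rw [← List.head?_drop, drop_factorCut]
    rcases hdrop : Q.drop i with _ | ⟨_ | ⟨a, v⟩, Q'⟩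
    · simp [ofFactors]
    · exact absurd rfl (hQ [] (List.mem_of_mem_drop (i := i) (by simp [hdrop])))
    · simp [ofFactors, ofFactor]

theorem strictMono_factorCut {Q : List (List α)} (hQ : ∀ q ∈ Q, q ≠ []) :
    StrictMono fun i : Fin (Q.length + 1) ↦ factorCut Q i := by
  refine Fin.strictMono_iff_lt_succ.mpr fun i ↦ ?_
  obtain ⟨a, v, hq⟩ := List.exists_cons_of_ne_nil (hQ _ (List.getElem_mem i.isLt))
  simp [factorCut, List.take_add_one, ofFactors, hq, ofFactor]

variable [DecidableEq α]

theorem occurrences_map_false_append (v : List α) (p : VincularPattern α) (w : List α) :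
    occurrences (v.map (·, false) ++ p) w =
      if v <+: w then occurrences p (w.drop v.length) else 0 := by
  induction v generalizing w with
  | nil => simp
  | cons x v ih =>
    cases w with
    | nil => simp [occurrences]
    | cons a w => simp [occurrences, ih, ite_and]

theorem occurrences_ofFactors {Q : List (List α)} (hQ : ∀ q ∈ Q, q ≠ []) (w : List α) :
    occurrences (ofFactors Q) w = gsCount Q w := by
  induction Q generalizing w with
  | nil => simp [ofFactors, occurrences, gsCount]
  | cons q Q ihQ =>
    obtain ⟨hq, hQ'⟩ := List.forall_mem_cons.mp hQ
    obtain ⟨x, v, rfl⟩ := List.exists_cons_of_ne_nil hq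
    have hpattern : ofFactors ((x :: v) :: Q) = (x, true) :: (v.map (·, false) ++ ofFactors Q) :=
      rfl
    induction w with
    | nil => simp [hpattern, occurrences, gsCount]
    | cons a w ihw =>
      rw [gsCount_cons_cons, ← ihw, hpattern, occurrences, occurrences_map_false_append, ihQ hQ']
      simp [ite_and]

end VincularPattern

open VincularPattern

/-- The matrix `M(w)` of the generalized subsequence with factor list `Q`; row and column `i`
stand for the gap after the first `i` factors. -/
def gsMatrix [DecidableEq α] (Q : List (List α)) (w : List α) :
    Matrix (Fin (Q.length + 1)) (Fin (Q.length + 1)) ℤ :=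
  Matrix.of fun i j ↦
    if i = j then 1
    else if i < j then (gsCount ((Q.drop (i : ℕ)).take ((j : ℕ) - (i : ℕ))) w : ℤ)
    else 0

theorem gsMatrix_eq_submatrix [DecidableEq α] {Q : List (List α)} (hQ : ∀ q ∈ Q, q ≠ [])
    (w : List α) :
    gsMatrix Q w = ((ofFactors Q).occurrenceMatrix w).submatrix
      (fun i : Fin _ ↦ factorCut Q i) (fun j : Fin _ ↦ factorCut Q j) := by
  ext i j
  have hle : factorCut Q i ≤ factorCut Q j ↔ i ≤ j := (strictMono_factorCut hQ).le_iff_le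
  rcases lt_trichotomy i j with hij | rfl | hji
  · have hsub : ∀ q ∈ (Q.drop i).take (j - i), q ≠ [] :=
      fun q hq ↦ hQ q (List.mem_of_mem_drop (List.mem_of_mem_take hq))
    simp [gsMatrix, occurrenceMatrix, hle, hij.le, hij.ne, hij, drop_take_factorCut Q hij.le,
      occurrences_ofFactors hsub]
  · simp [gsMatrix, occurrenceMatrix, occurrences]
  · simp [gsMatrix, occurrenceMatrix, hle, hji.not_ge, hji.ne', hji.not_gt]

theorem stmt6_general [DecidableEq α] {Q : List (List α)} (hQ : ∀ q ∈ Q, q ≠ []) (w : List α) :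
    IsTotallyNonneg (gsMatrix Q w) := by
  rw [gsMatrix_eq_submatrix hQ]
  exact (isTotallyNonneg_occurrenceMatrix (strictMono_factorCut hQ)
    (fun j ↦ isCut_factorCut hQ j) w).submatrix (strictMono_factorCut hQ) strictMono_id

end GeneralizedSubsequence

theorem stmt6 {α : Type*} [Fintype α] [DecidableEq α]
    (Q : List (List α)) (hQ : Q ≠ []) (hQ' : ∀ q ∈ Q, q ≠ [])
    (w : List α)
    (M : Matrix (Fin (Q.length + 1)) (Fin (Q.length + 1)) ℤ)
    (hM : ∀ i j : Fin (Q.length + 1),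
      M i j =
        if i = j then 1
        else if i < j then (gsCount ((Q.drop (i : ℕ)).take ((j : ℕ) - (i : ℕ))) w : ℤ)
        else 0)
    (m : ℕ) (r c : Fin m → Fin (Q.length + 1))
    (hr : StrictMono r) (hc : StrictMono c) :
    0 ≤ (M.submatrix r c).det := by
  obtain rfl : M = gsMatrix Q w := Matrix.ext hM
  exact stmt6_general hQ' w m r c hr hc
end

section
/- Let Σ = {a_1 < a_2 < ⋯ < a_k} be an ordered alphabet with k ≥ 1, and let Ψ: Σ* → M_{k+1}(ℤ) be the Parikh matrix mapping. Then for every word w over Σ, the matrix Ψ(w) = (m_{ij}) satisfies: m_{ij} = 0 for all 1 ≤ j < i ≤ k+1; m_{ii} = 1 for all 1 ≤ i ≤ k+1; and m_{i,j+1} = C(w, a_i a_{i+1} ⋯ a_j) for all 1 ≤ i ≤ j ≤ k. -/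
/-!
Left multiplication by the image of a letter `x` adds row `p + 1` to row `p` for each position `p`
of `v` that carries `x`. Index rows and columns by the cut positions `0, …, k` of `v`: the entries
of `Ψ (x :: w)` above the diagonal then obey the recursion that counts occurrences of
`v_i ⋯ v_{j-1}` according to whether they use the first letter of `x :: w`. In this indexing
the unit diagonal counts occurrences of the empty word.
-/

theorem sCount_nil_right {α : Type*} [DecidableEq α] (w : List α) : sCount w [] = 1 := by
  cases w <;> rfl

theorem eq_prod_map_singleton {α M : Type*} [Monoid M] {Ψ : List α → M}
    (hmul : ∀ w₁ w₂, Ψ (w₁ ++ w₂) = Ψ w₁ * Ψ w₂) (hone : Ψ [] = 1) (w : List α) :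
    Ψ w = (w.map fun x => Ψ [x]).prod := by
  induction w with
  | nil => exact hone
  | cons x w ih => rw [← List.singleton_append, hmul, ih, List.singleton_append, List.map_cons,
      List.prod_cons]

namespace Parikh

section Factor

variable {k : ℕ} {α : Type*}

/-- The factor `v_i ⋯ v_{j-1}` of the word `v = v_0 ⋯ v_{k-1}`, for cut positions `i` and `j`
in `0, …, k`. It is empty when `j ≤ i`. -/
def factor (v : Fin k → α) (i j : Fin (k + 1)) : List α :=
  ((List.finRange k).filter fun t => i ≤ t.castSucc ∧ t.castSucc < j).map v

theorem factor_eq_nil (v : Fin k → α) {i j : Fin (k + 1)} (h : j ≤ i) : factor v i j = [] := by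
  simpa [factor] using fun t hit => h.trans hit

theorem factor_castSucc (v : Fin k → α) {p : Fin k} {j : Fin (k + 1)} (h : p.castSucc < j) :
    factor v p.castSucc j = v p :: factor v p.succ j := by
  have sorted (q : Fin k → Bool) : ((List.finRange k).filter q).Pairwise (· < ·) :=
    (List.pairwise_lt_finRange k).filter q
  rw [factor, factor, ← List.map_cons]
  refine congrArg (List.map v) ((sorted _).eq_of_mem_iff (List.pairwise_cons.2 ⟨?_, sorted _⟩) ?_)
  · simp +contextual [Fin.succ_le_castSucc_iff]
  · intro t
    simp only [List.mem_filter, List.mem_finRange, true_and, List.mem_cons, decide_eq_true_eq,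
      Fin.castSucc_le_castSucc_iff, Fin.succ_le_castSucc_iff, le_iff_eq_or_lt (a := p)]
    grind

theorem factor_castSucc_succ (v : Fin k → α) (i j : Fin k) :
    factor v i.castSucc j.succ = ((List.finRange k).filter fun t => i ≤ t ∧ t ≤ j).map v := by
  simp only [factor, Fin.castSucc_le_castSucc_iff, Fin.castSucc_lt_succ_iff]

end Factor

variable {k : ℕ} {α R : Type*} [DecidableEq α] [Semiring R]

/-- The image of the letter `x` under the Parikh matrix mapping induced by the word
`v = v_0 ⋯ v_{k-1}`. The letters of `v` may repeat; the classical mapping for an ordered alphabet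
with `k` letters is the case `v = id`. -/
def letterMatrix (R : Type*) [Semiring R] (v : Fin k → α) (x : α) :
    Matrix (Fin (k + 1)) (Fin (k + 1)) R :=
  1 + ∑ p with v p = x, Matrix.single p.castSucc p.succ 1

/-- The Parikh matrix of the word `w` induced by the word `v`: the multiplicative extension of
`letterMatrix` to words. -/
def parikhMatrix (R : Type*) [Semiring R] (v : Fin k → α) (w : List α) :
    Matrix (Fin (k + 1)) (Fin (k + 1)) R :=
  (w.map (letterMatrix R v)).prod

theorem parikhMatrix_cons (v : Fin k → α) (x : α) (w : List α) :
    parikhMatrix R v (x :: w) = letterMatrix R v x * parikhMatrix R v w :=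
  List.prod_cons

theorem letterMatrix_mul_apply_castSucc (v : Fin k → α) (x : α)
    (M : Matrix (Fin (k + 1)) (Fin (k + 1)) R) (p : Fin k) (j : Fin (k + 1)) :
    (letterMatrix R v x * M) p.castSucc j =
      M p.castSucc j + if x = v p then M p.succ j else 0 := by
  have row (q : Fin k) : (Matrix.single q.castSucc q.succ (1 : R) * M) p.castSucc j =
      if q = p then M q.succ j else 0 := by
    split_ifs with h
    · simp [h]
    · exact Matrix.single_mul_apply_of_ne _ _ _ _ _ (by simpa using Ne.symm h) M
  simp only [letterMatrix, add_mul, one_mul, Finset.sum_mul, Matrix.add_apply,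
    Matrix.sum_apply, row, Finset.sum_ite_eq', Finset.mem_filter_univ, eq_comm (a := x)]

theorem letterMatrix_mul_apply_last (v : Fin k → α) (x : α)
    (M : Matrix (Fin (k + 1)) (Fin (k + 1)) R) (j : Fin (k + 1)) :
    (letterMatrix R v x * M) (Fin.last k) j = M (Fin.last k) j := by
  have row (q : Fin k) : (Matrix.single q.castSucc q.succ (1 : R) * M) (Fin.last k) j = 0 :=
    Matrix.single_mul_apply_of_ne _ _ _ _ _ (Fin.castSucc_ne_last q).symm M
  simp only [letterMatrix, add_mul, one_mul, Finset.sum_mul, Matrix.add_apply,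
    Matrix.sum_apply, row, Finset.sum_const_zero, add_zero]

theorem parikhMatrix_apply (v : Fin k → α) (w : List α) (i j : Fin (k + 1)) :
    parikhMatrix R v w i j = if i ≤ j then (sCount w (factor v i j) : R) else 0 := by
  induction w generalizing i with
  | nil =>
    rw [parikhMatrix, List.map_nil, List.prod_nil]
    rcases lt_trichotomy i j with hij | rfl | hji
    · obtain ⟨p, rfl⟩ := Fin.exists_castSucc_eq.2 (Fin.ne_last_of_lt hij)
      rw [Matrix.one_apply_ne hij.ne, if_pos hij.le, factor_castSucc v hij, sCount,
        Nat.cast_zero]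
    · rw [Matrix.one_apply_eq, if_pos le_rfl, factor_eq_nil v le_rfl, sCount_nil_right,
        Nat.cast_one]
    · rw [Matrix.one_apply_ne hji.ne', if_neg hji.not_ge]
  | cons x w ih =>
    rw [parikhMatrix_cons]
    cases i using Fin.lastCases with
    | last =>
      rw [letterMatrix_mul_apply_last, ih, factor_eq_nil v j.le_last, sCount_nil_right,
        sCount_nil_right]
    | cast p =>
      rw [letterMatrix_mul_apply_castSucc, ih, ih]
      by_cases hpj : p.castSucc < j
      · rw [if_pos hpj.le, if_pos hpj.le, if_pos (Fin.castSucc_lt_iff_succ_le.1 hpj),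
          factor_castSucc v hpj, sCount, Nat.cast_add, Nat.cast_ite, Nat.cast_zero]
      · rw [if_neg (mt Fin.castSucc_lt_iff_succ_le.2 hpj), ite_self, add_zero,
          factor_eq_nil v (not_lt.1 hpj), sCount_nil_right, sCount_nil_right]

end Parikh

open Parikh in
theorem stmt8_general {k : ℕ} {α R : Type*} [DecidableEq α] [Semiring R] (v : Fin k → α)
    (Ψ : List α → Matrix (Fin (k + 1)) (Fin (k + 1)) R)
    (hmul : ∀ w₁ w₂ : List α, Ψ (w₁ ++ w₂) = Ψ w₁ * Ψ w₂)
    (hone : Ψ [] = 1)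
    (hletter : ∀ x : α, Ψ [x] = 1 + ∑ p with v p = x, Matrix.single p.castSucc p.succ 1)
    (w : List α) :
    (∀ i j : Fin (k + 1), j < i → Ψ w i j = 0) ∧
    (∀ i : Fin (k + 1), Ψ w i i = 1) ∧
    (∀ i j : Fin k, i ≤ j →
      Ψ w i.castSucc j.succ =
        (sCount w (((List.finRange k).filter fun t => i ≤ t ∧ t ≤ j).map v) : R)) := by
  have hΨ : Ψ w = parikhMatrix R v w := by
    rw [eq_prod_map_singleton hmul hone, funext hletter]
    rfl
  rw [hΨ]
  refine ⟨fun i j hji => ?_, fun i => ?_, fun i j hij => ?_⟩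
  · rw [parikhMatrix_apply, if_neg hji.not_ge]
  · rw [parikhMatrix_apply, if_pos le_rfl, factor_eq_nil v le_rfl, sCount_nil_right, Nat.cast_one]
  · rw [parikhMatrix_apply, if_pos (Fin.castSucc_lt_succ_iff.2 hij).le, factor_castSucc_succ]

theorem stmt8 (k : ℕ) (hk : 1 ≤ k)
    (Ψ : List (Fin k) → Matrix (Fin (k + 1)) (Fin (k + 1)) ℤ)
    (hmul : ∀ w1 w2 : List (Fin k), Ψ (w1 ++ w2) = Ψ w1 * Ψ w2)
    (hone : Ψ [] = 1)
    (hletter : ∀ q : Fin k, Ψ [q] = 1 + Matrix.single q.castSucc q.succ 1)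
    (w : List (Fin k)) :
    (∀ i j : Fin (k + 1), j < i → Ψ w i j = 0) ∧
    (∀ i : Fin (k + 1), Ψ w i i = 1) ∧
    (∀ i j : Fin k, i ≤ j →
      Ψ w i.castSucc j.succ =
        (sCount w ((List.finRange k).filter fun t => i ≤ t ∧ t ≤ j) : ℤ)) := by
  simpa only [List.map_id] using
    stmt8_general id Ψ hmul hone (by simpa [Finset.filter_eq'] using hletter) w
end

section
/- Let Q_1 = p_1•⋯•p_m and Q_2 = q_1•⋯•q_s be generalized subsequences over Σ such that no letter of Σ occurs both in some factor p_i and in some factor q_j (Q_1 and Q_2 are disjoint). Then for every word w over Σ: |w|_{Q_1} · |w|_{Q_2} = Σ_{X ∈ Q_1⧢Q_2} |w|_X, where the sum ranges over the ground shuffle of Q_1 and Q_2. -/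
/-- All interleavings (ground shuffle) of two sequences, each interleaving appearing
once for each choice of which positions come from the first sequence. -/
def shuffles {β : Type*} : List β → List β → List (List β)
  | [], ys => [ys]
  | x :: xs, [] => [x :: xs]
  | x :: xs, y :: ys =>
      ((shuffles xs (y :: ys)).map fun z => x :: z) ++
      ((shuffles (x :: xs) ys).map fun z => y :: z)
termination_by xs ys => xs.length + ys.length

/-!
For a word `q`, let `occSum q f w` be the sum of `f` over the suffixes of `w` left behind by the
occurrences of `q`, so that counting occurrences of `q_1•⋯•q_n` amounts to iterating `occSum`.
If `p` and `q` never overlap, then of two occurrences, one of `p` and one of `q`, one ends before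
the other starts, and splitting a product of two sums accordingly gives
`occSum p f * occSum q g = occSum p (f * occSum q g) + occSum q (occSum p f * g)`.
This is the Rota–Baxter identity of weight zero, which turns products of iterated sums into shuffles
exactly as integration by parts does for iterated integrals. Nonempty words without a common
letter never overlap.
-/

section

variable {α : Type*} {p q : List α}

/-- Two words are non-overlapping if, in every word, each occurrence of one ends before or starts
after each occurrence of the other. This is what the product rule `occSum_mul_occSum` asks of the
factors; it also holds for some words with common letters, such as `ab` and `acb`. -/
def NonOverlapping (p q : List α) : Prop :=
  ∀ ⦃w : List α⦄ ⦃i j : ℕ⦄, p <+: w.drop i → q <+: w.drop j →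
    i + p.length ≤ j ∨ j + q.length ≤ i

namespace NonOverlapping

theorem symm (h : NonOverlapping p q) : NonOverlapping q p :=
  fun _ _ _ hq hp => (h hp hq).symm

theorem of_disjoint (hp : p ≠ []) (hq : q ≠ []) (h : p.Disjoint q) : NonOverlapping p q := by
  intro w i j hpi hqj
  by_contra! ⟨hj, hi⟩
  have hp_pos : 0 < p.length := List.length_pos_iff.mpr hp
  have hq_pos : 0 < q.length := List.length_pos_iff.mpr hq
  have hip : max i j - i < p.length := by omega
  have hjq : max i j - j < q.length := by omega
  have common : p[max i j - i] = q[max i j - j] := by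
    rw [hpi.getElem hip, hqj.getElem hjq, List.getElem_drop, List.getElem_drop]
    congr 1
    omega
  exact h (List.getElem_mem hip) (common ▸ List.getElem_mem hjq)

theorem not_prefix_drop (h : NonOverlapping p q) (hq : q ≠ []) {w : List α} (hp : p <+: w)
    {i : ℕ} (hi : i < p.length) : ¬q <+: w.drop i := by
  intro hqi
  have hpos : 0 < q.length := List.length_pos_iff.mpr hq
  have := h (i := 0) hp hqi
  omega

theorem not_prefix (h : NonOverlapping p q) (hp : p ≠ []) (hq : q ≠ []) {w : List α}
    (hpw : p <+: w) : ¬q <+: w :=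
  h.not_prefix_drop hq hpw (i := 0) (List.length_pos_iff.mpr hp)

end NonOverlapping

variable [DecidableEq α]

/-- The sum of `f` over the occurrences of the word `q` in a word, where `f` is evaluated at the
suffix following the occurrence. It is the operator through which prepending the factor `q` to a
generalized subsequence acts on `gsCount`, see `gsCount_cons`; it is bundled as an additive map
in `f`. -/
def occSum {M : Type*} [AddCommMonoid M] (q : List α) : (List α → M) →+ (List α → M) where
  toFun f w := ∑ i ∈ Finset.range (w.length + 1 - q.length),
    if q <+: w.drop i then f (w.drop (i + q.length)) else 0
  map_zero' := by
    ext w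
    simp
  map_add' f g := by
    ext w
    simp only [Pi.add_apply, ← Finset.sum_add_distrib, ← ite_add_zero]

section AddCommMonoid

variable {M : Type*} [AddCommMonoid M]

theorem occSum_apply (q : List α) (f : List α → M) (w : List α) :
    occSum q f w = ∑ i ∈ Finset.range (w.length + 1 - q.length),
      if q <+: w.drop i then f (w.drop (i + q.length)) else 0 :=
  rfl

theorem occSum_nil_right (hq : q ≠ []) (f : List α → M) : occSum q f [] = 0 := by
  simp [occSum_apply, hq]

theorem occSum_cons_right (q : List α) (f : List α → M) (a : α) (w : List α) :
    occSum q f (a :: w) =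
      (if q <+: a :: w then f ((a :: w).drop q.length) else 0) + occSum q f w := by
  rw [occSum_apply, occSum_apply]
  rcases le_or_gt q.length (w.length + 1) with hle | hlt
  · rw [List.length_cons, Nat.sub_add_comm hle, Finset.sum_range_succ', add_comm]
    simp only [List.drop_zero, zero_add, List.drop_succ_cons, Nat.add_right_comm _ 1]
  · have hnot : ¬q <+: a :: w := fun h => hlt.not_ge h.length_le
    simp [hnot, Nat.sub_eq_zero_of_le hlt, Nat.sub_eq_zero_of_le hlt.le]

theorem occSum_cons_of_not_prefix {a : α} {w : List α} (h : ¬q <+: a :: w) (f : List α → M) :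
    occSum q f (a :: w) = occSum q f w := by
  rw [occSum_cons_right, if_neg h, zero_add]

theorem occSum_drop (f : List α → M) {w : List α} {k : ℕ} (h : ∀ i < k, ¬q <+: w.drop i) :
    occSum q f (w.drop k) = occSum q f w := by
  induction k generalizing w with
  | zero => rw [List.drop_zero]
  | succ k ih =>
    cases w with
    | nil => rw [List.drop_nil]
    | cons a w =>
      have hw : ∀ i < k, ¬q <+: w.drop i := fun i hi => h (i + 1) (Nat.succ_lt_succ hi)
      rw [List.drop_succ_cons, ih hw, occSum_cons_of_not_prefix (h 0 k.succ_pos)]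

theorem NonOverlapping.occSum_drop_length (h : NonOverlapping p q) (hq : q ≠ []) {w : List α}
    (hpw : p <+: w) (f : List α → M) : occSum q f (w.drop p.length) = occSum q f w :=
  occSum_drop f fun _ => h.not_prefix_drop hq hpw

end AddCommMonoid

section Mul

variable {R : Type*} [NonUnitalNonAssocSemiring R]

theorem occSum_mul_occSum (hp : p ≠ []) (hq : q ≠ []) (h : NonOverlapping p q)
    (f g : List α → R) :
    occSum p f * occSum q g = occSum p (f * occSum q g) + occSum q (occSum p f * g) := by
  ext w
  simp only [Pi.mul_apply, Pi.add_apply]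
  induction w with
  | nil => simp only [occSum_nil_right hp, occSum_nil_right hq, zero_mul, add_zero]
  | cons a w ih =>
    by_cases hpw : p <+: a :: w
    · have hqw : ¬q <+: a :: w := h.not_prefix hp hq hpw
      simp only [occSum_cons_right p, occSum_cons_of_not_prefix hqw, if_pos hpw, Pi.mul_apply,
        h.occSum_drop_length hq hpw, add_mul, ih, add_assoc]
    · by_cases hqw : q <+: a :: w
      · simp only [occSum_cons_right q, occSum_cons_of_not_prefix hpw, if_pos hqw, Pi.mul_apply,
          h.symm.occSum_drop_length hp hqw, mul_add, ih, add_left_comm]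
      · simp only [occSum_cons_of_not_prefix hpw, occSum_cons_of_not_prefix hqw, ih]

end Mul

theorem gsCount_nil : gsCount ([] : List (List α)) = 1 := by
  ext w
  rw [gsCount, Pi.one_apply]

theorem gsCount_cons (q : List α) (Q : List (List α)) :
    gsCount (q :: Q) = occSum q (gsCount Q) := by
  ext w
  simp only [gsCount, occSum_apply, List.prefix_iff_eq_take, eq_comm]

theorem sum_map_gsCount_cons (q : List α) (L : List (List (List α))) :
    (L.map fun X => gsCount (q :: X)).sum = occSum q (L.map gsCount).sum := by
  simp only [gsCount_cons, map_list_sum, List.map_map, Function.comp_def]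

theorem stmt10_general (Q1 Q2 : List (List α)) (h1 : ∀ p ∈ Q1, p ≠ []) (h2 : ∀ q ∈ Q2, q ≠ [])
    (h : ∀ p ∈ Q1, ∀ q ∈ Q2, NonOverlapping p q) :
    gsCount Q1 * gsCount Q2 = ((shuffles Q1 Q2).map gsCount).sum := by
  induction Q1, Q2 using shuffles.induct with
  | case1 Q => simp [shuffles, gsCount_nil]
  | case2 p P => simp [shuffles, gsCount_nil]
  | case3 p P q Q ihP ihQ =>
    simp only [List.forall_mem_cons] at h1 h2 h ihP ihQ
    obtain ⟨⟨hpq, hpQ⟩, hP⟩ := h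
    calc gsCount (p :: P) * gsCount (q :: Q)
        = occSum p (gsCount P * gsCount (q :: Q)) + occSum q (gsCount (p :: P) * gsCount Q) := by
          simp only [gsCount_cons, occSum_mul_occSum h1.1 h2.1 hpq]
      _ = occSum p ((shuffles P (q :: Q)).map gsCount).sum +
            occSum q ((shuffles (p :: P) Q).map gsCount).sum := by
          rw [ihP h1.2 h2 hP, ihQ h1 h2.2 ⟨hpQ, fun x hx => (hP x hx).2⟩]
      _ = ((shuffles (p :: P) (q :: Q)).map gsCount).sum := by
          simp only [shuffles, List.map_append, List.sum_append, List.map_map, Function.comp_def,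
            sum_map_gsCount_cons]

end

theorem stmt10 {α : Type*} [Fintype α] [DecidableEq α]
    (Q1 Q2 : List (List α))
    (h1 : Q1 ≠ []) (h1' : ∀ q ∈ Q1, q ≠ [])
    (h2 : Q2 ≠ []) (h2' : ∀ q ∈ Q2, q ≠ [])
    (hdisj : ∀ x : α, (∃ p ∈ Q1, x ∈ p) → (∃ q ∈ Q2, x ∈ q) → False)
    (w : List α) :
    gsCount Q1 w * gsCount Q2 w =
      ((shuffles Q1 Q2).map fun X => gsCount X w).sum := by
  have h := stmt10_general Q1 Q2 h1' h2' fun p hp q hq =>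
    .of_disjoint (h1' p hp) (h2' q hq) fun x hxp hxq => hdisj x ⟨p, hp, hxp⟩ ⟨q, hq, hxq⟩
  simpa only [Pi.mul_apply, Pi.list_sum_apply, List.map_map, Function.comp_def] using congrFun h w
end

section
/- Let Q_1 = p_1•⋯•p_m and Q_2 = q_1•⋯•q_s be arbitrary generalized subsequences over Σ (not necessarily over disjoint sets of letters). Then for every word w over Σ: |w|_{Q_1} · |w|_{Q_2} ≥ Σ_{X ∈ Q_1⧢Q_2} |w|_X, where the sum ranges over the ground shuffle of Q_1 and Q_2. -/
/-!
Fix occurrences of `Q₁ = p :: P` and of `Q₂ = q :: Q`, whose leading factors sit at positions `i`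
and `j`. An occurrence of an interleaving that starts with `p` forces `i + |p| ≤ j`, and one that
starts with `q` forces `j + |q| ≤ i`. As `q` is nonempty these cases exclude each other, so the
interleavings only account for a part of the product of the two counts; what is lost are the pairs
of occurrences in which two factors overlap.
-/

/-- The set of (zero-based) starting positions of the factor `q` in the word `w`. The empty factor
also occurs at the position `w.length`, just past the end of `w`. -/
def occurrences {α : Type*} [DecidableEq α] (q w : List α) : Finset ℕ :=
  {i ∈ Finset.range (w.length + 1) | q <+: w.drop i}

theorem sum_mul_sum_filter_add_sum_filter_mul_le {ι κ R : Type*}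
    [NonUnitalNonAssocSemiring R] [PartialOrder R] [CanonicallyOrderedAdd R]
    (s : Finset ι) (t : Finset κ) (f : ι → R) (g : κ → R) {r : ι → κ → Prop} {r' : κ → ι → Prop}
    [∀ i, DecidablePred (r i)] [∀ j, DecidablePred (r' j)] (h : ∀ i j, r i j → ¬ r' j i) :
    ∑ i ∈ s, f i * ∑ j ∈ t with r i j, g j + ∑ j ∈ t, (∑ i ∈ s with r' j i, f i) * g j ≤
      (∑ i ∈ s, f i) * ∑ j ∈ t, g j := by
  simp only [Finset.sum_filter, Finset.mul_sum, Finset.sum_mul]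
  rw [Finset.sum_comm (s := s), ← Finset.sum_add_distrib]
  refine Finset.sum_le_sum fun j _ ↦ ?_
  rw [← Finset.sum_add_distrib]
  refine Finset.sum_le_sum fun i _ ↦ ?_
  by_cases hr : r i j
  · simp [hr, h i j hr]
  · by_cases hr' : r' j i <;> simp [hr, hr']

section Occurrences

variable {α : Type*} [DecidableEq α]

theorem mem_occurrences {q w : List α} {i : ℕ} :
    i ∈ occurrences q w ↔ i ≤ w.length ∧ q <+: w.drop i := by
  simp only [occurrences, Finset.mem_filter, Finset.mem_range, Nat.lt_succ_iff]

theorem add_length_le_of_mem_occurrences {q w : List α} {i : ℕ} (hi : i ∈ occurrences q w) :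
    i + q.length ≤ w.length := by
  obtain ⟨hiw, hq⟩ := mem_occurrences.1 hi
  have := hq.length_le
  rw [List.length_drop] at this
  omega

theorem map_add_occurrences_drop (q : List α) {w : List α} {n : ℕ} (hn : n ≤ w.length) :
    (occurrences q (w.drop n)).map (addLeftEmbedding n) = {j ∈ occurrences q w | n ≤ j} := by
  ext j
  simp only [Finset.mem_map, Finset.mem_filter, mem_occurrences, addLeftEmbedding_apply,
    List.length_drop, List.drop_drop]
  constructor
  · rintro ⟨i, ⟨hi, hq⟩, rfl⟩
    exact ⟨⟨by omega, hq⟩, by omega⟩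
  · rintro ⟨⟨hj, hq⟩, hnj⟩
    obtain ⟨i, rfl⟩ := Nat.exists_eq_add_of_le hnj
    exact ⟨i, ⟨by omega, hq⟩, rfl⟩

theorem gsCount_cons_s11 (q : List α) (Q : List (List α)) (w : List α) :
    gsCount (q :: Q) w = ∑ i ∈ occurrences q w, gsCount Q (w.drop (i + q.length)) := by
  have hocc : occurrences q w =
      {i ∈ Finset.range (w.length + 1 - q.length) | (w.drop i).take q.length = q} := by
    ext i
    rw [Finset.mem_filter, Finset.mem_range, eq_comm, ← List.prefix_iff_eq_take]
    constructor
    · intro hi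
      have := add_length_le_of_mem_occurrences hi
      exact ⟨by omega, (mem_occurrences.1 hi).2⟩
    · rintro ⟨hi, hq⟩
      exact mem_occurrences.2 ⟨by omega, hq⟩
  rw [gsCount, hocc, Finset.sum_filter]

theorem gsCount_cons_drop (q : List α) (Q : List (List α)) {w : List α} {n : ℕ}
    (hn : n ≤ w.length) :
    gsCount (q :: Q) (w.drop n) =
      ∑ j ∈ occurrences q w with n ≤ j, gsCount Q (w.drop (j + q.length)) := by
  rw [gsCount_cons_s11, ← map_add_occurrences_drop q hn, Finset.sum_map]
  simp only [List.drop_drop, addLeftEmbedding_apply, add_assoc]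

theorem sum_map_gsCount_cons_s11 (q : List α) (L : List (List (List α))) (w : List α) :
    ((L.map (q :: ·)).map fun X ↦ gsCount X w).sum =
      ∑ i ∈ occurrences q w, (L.map fun X ↦ gsCount X (w.drop (i + q.length))).sum := by
  induction L with
  | nil => simp
  | cons X L ih =>
    simp only [List.map_cons, List.sum_cons, ih, gsCount_cons_s11, Finset.sum_add_distrib]

theorem sum_map_gsCount_shuffles_cons_cons (p q : List α) (P Q : List (List α)) (w : List α) :
    ((shuffles (p :: P) (q :: Q)).map fun X ↦ gsCount X w).sum =
      ∑ i ∈ occurrences p w,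
        ((shuffles P (q :: Q)).map fun X ↦ gsCount X (w.drop (i + p.length))).sum +
      ∑ j ∈ occurrences q w,
        ((shuffles (p :: P) Q).map fun X ↦ gsCount X (w.drop (j + q.length))).sum := by
  rw [shuffles, List.map_append, List.sum_append, sum_map_gsCount_cons_s11, sum_map_gsCount_cons_s11]

theorem sum_gsCount_mul_gsCount_drop_add_le (p : List α) {q : List α} (hq : q ≠ [])
    (P Q : List (List α)) (w : List α) :
    ∑ i ∈ occurrences p w,
        gsCount P (w.drop (i + p.length)) * gsCount (q :: Q) (w.drop (i + p.length)) +
      ∑ j ∈ occurrences q w,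
        gsCount (p :: P) (w.drop (j + q.length)) * gsCount Q (w.drop (j + q.length)) ≤
      gsCount (p :: P) w * gsCount (q :: Q) w := by
  have hexcl : ∀ i j, i + p.length ≤ j → ¬ j + q.length ≤ i := by
    have := List.length_pos_iff.2 hq
    omega
  rw [gsCount_cons_s11 p P w, gsCount_cons_s11 q Q w]
  refine le_of_eq_of_le ?_ (sum_mul_sum_filter_add_sum_filter_mul_le _ _ _ _ hexcl)
  congr 1
  · refine Finset.sum_congr rfl fun i hi ↦ ?_
    rw [gsCount_cons_drop q Q (add_length_le_of_mem_occurrences hi)]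
  · refine Finset.sum_congr rfl fun j hj ↦ ?_
    rw [gsCount_cons_drop p P (add_length_le_of_mem_occurrences hj)]

end Occurrences

theorem stmt11_general {α : Type*} [DecidableEq α] (Q1 Q2 : List (List α))
    (h2 : ∀ q ∈ Q2, q ≠ []) (w : List α) :
    ((shuffles Q1 Q2).map fun X => gsCount X w).sum ≤ gsCount Q1 w * gsCount Q2 w := by
  fun_induction shuffles Q1 Q2 generalizing w with
  | case1 Q2 => simp [gsCount]
  | case2 p P => simp [gsCount]
  | case3 p P q Q ih₁ ih₂ =>
    obtain ⟨hq, hQ⟩ := List.forall_mem_cons.1 h2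
    rw [← shuffles, sum_map_gsCount_shuffles_cons_cons]
    grw [← sum_gsCount_mul_gsCount_drop_add_le p hq P Q w]
    gcongr with i _ j _
    · exact ih₁ h2 _
    · exact ih₂ hQ _

theorem stmt11 {α : Type*} [Fintype α] [DecidableEq α]
    (Q1 Q2 : List (List α))
    (h1 : Q1 ≠ []) (h1' : ∀ q ∈ Q1, q ≠ [])
    (h2 : Q2 ≠ []) (h2' : ∀ q ∈ Q2, q ≠ [])
    (w : List α) :
    ((shuffles Q1 Q2).map fun X => gsCount X w).sum ≤
      gsCount Q1 w * gsCount Q2 w :=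
  stmt11_general Q1 Q2 h2' w
end
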